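/- Let L_1, …, L_k be L-shapes placed so that the reference point of L_i is (Σ_{j<i} wx(L_j), Σ_{j<i} wy(L_j)), and assume this placement is a valid packing of the unit bin. Let L be a further L-shape placed with reference point (X, Y), where X = Σ_{i=1}^{k} wx(L_i) and Y = Σ_{i=1}^{k} wy(L_i). Then the resulting placement of all k+1 L-shapes is a valid packing of the unit bin if and only if X + ℓx(L) ≤ 1 and Y + ℓy(L) ≤ 1. -/

import Mathlib

/-- An L-shape, given by its four parameters: arm lengths `lx, ly` and widths `wx, wy`. -/
structure LShape where
  lx : ℝ
  wx : ℝ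
  ly : ℝ
  wy : ℝ

/-- The parameter constraints of an L-shape: `0 ≤ wx ≤ lx ≤ 1` and `0 ≤ wy ≤ ly ≤ 1`. -/
def LShape.IsValid (L : LShape) : Prop :=
  0 ≤ L.wx ∧ L.wx ≤ L.lx ∧ L.lx ≤ 1 ∧ 0 ≤ L.wy ∧ L.wy ≤ L.ly ∧ L.ly ≤ 1

/-- The point set `([0,lx]×[0,wy]) ∪ ([0,wx]×[0,ly])` of an L-shape (reference point at the
origin). -/
def LShape.toSet (L : LShape) : Set (ℝ × ℝ) :=
  Set.Icc ((0, 0) : ℝ × ℝ) (L.lx, L.wy) ∪ Set.Icc ((0, 0) : ℝ × ℝ) (L.wx, L.ly)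

/-- Translate a set in the plane by a vector. -/
def planeTranslate (v : ℝ × ℝ) (S : Set (ℝ × ℝ)) : Set (ℝ × ℝ) := (· + v) '' S

/-- The unit bin `[0,1]²`. -/
def unitBin : Set (ℝ × ℝ) := Set.Icc ((0, 0) : ℝ × ℝ) (1, 1)

/-- A valid packing of the shapes `L i` translated by `v i` into one unit bin. -/
def ValidPacking {n : ℕ} (L : Fin n → LShape) (v : Fin n → ℝ × ℝ) : Prop :=
  (∀ i, planeTranslate (v i) (L i).toSet ⊆ unitBin) ∧
  ∀ i j, i ≠ j →
    Disjoint (interior (planeTranslate (v i) (L i).toSet))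
             (interior (planeTranslate (v j) (L j).toSet))

/-- The reference point of the `i`-th shape in a stacked gravity packing:
`(Σ_{j<i} wx(L_j), Σ_{j<i} wy(L_j))`. -/
noncomputable def stackPos {k : ℕ} (L0 : Fin k → LShape) (i : Fin k) : ℝ × ℝ :=
  (∑ j ∈ Finset.Iio i, (L0 j).wx, ∑ j ∈ Finset.Iio i, (L0 j).wy)

/-!
Write `(X, Y)` for the reflex corner of the top shape of the stack. Widths are nonnegative, so the
reflex corner of every stacked shape is at most `(X, Y)`, and each arm of such a shape lies in
`{x ≤ X}` or in `{y ≤ Y}`. The interior of the new shape lies in the open quadrant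
`{x > X, y > Y}`, so it meets none of them and only containment in the bin matters. As
`(X, Y) ≥ 0`, containment is decided by the two arm tips.
-/

theorem mem_interior_Ici_prod {α β : Type*}
    [LinearOrder α] [TopologicalSpace α] [OrderTopology α] [DenselyOrdered α] [NoMinOrder α]
    [LinearOrder β] [TopologicalSpace β] [OrderTopology β] [DenselyOrdered β] [NoMinOrder β]
    {w p : α × β} : p ∈ interior (Set.Ici w) ↔ w.1 < p.1 ∧ w.2 < p.2 := by
  rw [Set.Ici_prod_eq, interior_prod_eq, interior_Ici, interior_Ici]
  rfl

theorem sum_Iio_add_le_sum_univ {ι M : Type*} [Fintype ι] [PartialOrder ι]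
    [LocallyFiniteOrderBot ι] [AddCommMonoid M] [PartialOrder M] [IsOrderedAddMonoid M]
    {f : ι → M} (hf : ∀ i, 0 ≤ f i) (i : ι) :
    ∑ j ∈ Finset.Iio i, f j + f i ≤ ∑ j, f j := by
  rw [Finset.sum_Iio_add_eq_sum_Iic]
  exact Finset.sum_le_univ_sum_of_nonneg hf

namespace LShape

/-- The reflex corner `(wx, wy)` of an L-shape, relative to its reference point: the offset from
one reference point of a stack to the next. -/
def reflexCorner (L : LShape) : ℝ × ℝ := (L.wx, L.wy)

theorem IsValid.reflexCorner_nonneg {L : LShape} (hL : L.IsValid) : 0 ≤ L.reflexCorner :=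
  ⟨hL.1, hL.2.2.2.1⟩

theorem sum_reflexCorner {ι : Type*} (s : Finset ι) (L : ι → LShape) :
    ∑ i ∈ s, (L i).reflexCorner = (∑ i ∈ s, (L i).wx, ∑ i ∈ s, (L i).wy) :=
  (prod_mk_sum s _ _).symm

theorem planeTranslate_toSet (L : LShape) (v : ℝ × ℝ) :
    planeTranslate v L.toSet =
      Set.Icc v ((L.lx, L.wy) + v) ∪ Set.Icc v ((L.wx, L.ly) + v) := by
  have hv : ((0, 0) : ℝ × ℝ) + v = v := zero_add v
  rw [toSet, planeTranslate, Set.image_union, Set.image_add_const_Icc, Set.image_add_const_Icc, hv]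

theorem planeTranslate_toSet_subset_Ici (L : LShape) (v : ℝ × ℝ) :
    planeTranslate v L.toSet ⊆ Set.Ici v := by
  rw [planeTranslate_toSet]
  exact Set.union_subset Set.Icc_subset_Ici_self Set.Icc_subset_Ici_self

theorem IsValid.planeTranslate_toSet_subset_Icc_iff {L : LShape} (hL : L.IsValid)
    {v a b : ℝ × ℝ} :
    planeTranslate v L.toSet ⊆ Set.Icc a b ↔
      a ≤ v ∧ v.1 + L.lx ≤ b.1 ∧ v.2 + L.ly ≤ b.2 := by
  obtain ⟨hwx, hwlx, -, hwy, hwly, -⟩ := hL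
  have hxArm : v ≤ (L.lx, L.wy) + v := le_add_of_nonneg_left ⟨hwx.trans hwlx, hwy⟩
  have hyArm : v ≤ (L.wx, L.ly) + v := le_add_of_nonneg_left ⟨hwx, hwy.trans hwly⟩
  rw [planeTranslate_toSet, Set.union_subset_iff, Set.Icc_subset_Icc_iff hxArm,
    Set.Icc_subset_Icc_iff hyArm]
  simp only [Prod.le_def, Prod.fst_add, Prod.snd_add]
  constructor
  · rintro ⟨⟨hav, hxTip, -⟩, -, -, hyTip⟩
    exact ⟨hav, by linarith, by linarith⟩
  · rintro ⟨hav, hx, hy⟩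
    exact ⟨⟨hav, by linarith, by linarith⟩, hav, by linarith, by linarith⟩

theorem disjoint_planeTranslate_interior_Ici_of_reflexCorner_le {L : LShape} {v w : ℝ × ℝ}
    (h : v + L.reflexCorner ≤ w) :
    Disjoint (planeTranslate v L.toSet) (interior (Set.Ici w)) := by
  rw [Set.disjoint_left, planeTranslate_toSet]
  intro p hp hpw
  obtain ⟨hX, hY⟩ : v.1 + L.wx ≤ w.1 ∧ v.2 + L.wy ≤ w.2 := h
  obtain ⟨hpX, hpY⟩ := mem_interior_Ici_prod.1 hpw
  rcases hp with ⟨-, -, hpArm : p.2 ≤ L.wy + v.2⟩ | ⟨-, hpArm : p.1 ≤ L.wx + v.1, -⟩ <;> linarith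

theorem disjoint_interior_planeTranslate_of_reflexCorner_le {A : LShape} {v w : ℝ × ℝ}
    (h : v + A.reflexCorner ≤ w) (B : LShape) :
    Disjoint (interior (planeTranslate v A.toSet)) (interior (planeTranslate w B.toSet)) :=
  (disjoint_planeTranslate_interior_Ici_of_reflexCorner_le h).mono interior_subset
    (interior_mono (B.planeTranslate_toSet_subset_Ici w))

end LShape

section Packing

variable {k : ℕ} {L0 : Fin k → LShape}

theorem validPacking_snoc_iff {v : Fin k → ℝ × ℝ} {L : LShape} {w : ℝ × ℝ} :
    ValidPacking (Fin.snoc L0 L) (Fin.snoc v w) ↔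
      ValidPacking L0 v ∧ planeTranslate w L.toSet ⊆ unitBin ∧
        ∀ i, Disjoint (interior (planeTranslate (v i) (L0 i).toSet))
          (interior (planeTranslate w L.toSet)) := by
  simp only [ValidPacking, Fin.forall_fin_succ', Fin.snoc_castSucc, Fin.snoc_last, ne_eq,
    Fin.castSucc_inj, Fin.castSucc_ne_last, (Fin.castSucc_ne_last _).symm, not_true_eq_false,
    not_false_eq_true, forall_true_left, false_imp_iff, and_true, forall_and,
    disjoint_comm (a := interior (planeTranslate w L.toSet))]
  tauto

theorem validPacking_snoc_iff_of_reflexCorner_le {v : Fin k → ℝ × ℝ} {L : LShape} {w : ℝ × ℝ}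
    (hpack : ValidPacking L0 v) (hL : L.IsValid) (hw : 0 ≤ w)
    (hcorner : ∀ i, v i + (L0 i).reflexCorner ≤ w) :
    ValidPacking (Fin.snoc L0 L) (Fin.snoc v w) ↔ w.1 + L.lx ≤ 1 ∧ w.2 + L.ly ≤ 1 := by
  have hdisj i := LShape.disjoint_interior_planeTranslate_of_reflexCorner_le (hcorner i) L
  rw [validPacking_snoc_iff, and_iff_right hpack, and_iff_left hdisj, unitBin,
    hL.planeTranslate_toSet_subset_Icc_iff]
  exact and_iff_right hw

theorem stackPos_add_reflexCorner_le (hL0 : ∀ i, 0 ≤ (L0 i).reflexCorner) (i : Fin k) :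
    stackPos L0 i + (L0 i).reflexCorner ≤ ∑ j, (L0 j).reflexCorner := by
  rw [stackPos, ← LShape.sum_reflexCorner]
  exact sum_Iio_add_le_sum_univ hL0 i

end Packing

/-- given a stacked gravity packing of `L_1, …, L_k` in the unit bin, placing
a further L-shape `L` with reference point `(X, Y) = (Σ wx(L_i), Σ wy(L_i))` on top of the
stack yields a valid packing of all `k+1` shapes if and only if `X + ℓx(L) ≤ 1` and
`Y + ℓy(L) ≤ 1`. -/
theorem stmt17 (k : ℕ) (L0 : Fin k → LShape) (L : LShape)
    (hL0 : ∀ i, (L0 i).IsValid) (hL : L.IsValid)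
    (hpack : ValidPacking L0 (stackPos L0)) :
    ValidPacking (Fin.snoc L0 L)
      (Fin.snoc (stackPos L0) (∑ j, (L0 j).wx, ∑ j, (L0 j).wy)) ↔
    (∑ j, (L0 j).wx) + L.lx ≤ 1 ∧ (∑ j, (L0 j).wy) + L.ly ≤ 1 := by
  have hcorner i : 0 ≤ (L0 i).reflexCorner := (hL0 i).reflexCorner_nonneg
  have hsum : ∑ j, (L0 j).reflexCorner = (∑ j, (L0 j).wx, ∑ j, (L0 j).wy) :=
    LShape.sum_reflexCorner Finset.univ L0
  exact validPacking_snoc_iff_of_reflexCorner_le hpack hL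
    (hsum ▸ Finset.sum_nonneg fun i _ ↦ hcorner i)
    (fun i ↦ hsum ▸ stackPos_add_reflexCorner_le hcorner i)
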